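/- arXiv:2006.12405 — 3 statements merged into one kernel-verified Lean document; each statement's English description precedes it below -/
import Mathlib

section
/- Let 𝒜 be a unital C*-algebra, 𝒮 ⊆ 𝒜 an operator system, and φ: 𝒮 → M_n(ℂ) a linear map. Then φ is decomposable if and only if for every positive integer m and every S ∈ J_m(𝒮), the matrix φ_m(S) = [φ(s_{jk})] is positive semidefinite. -/
/-!
Pairing `φ : S → Mₙ(ℂ)` with the functional `s_φ` on `Mₙ(S)` turns decomposability into a statement
about dual cones. The quadratic form of `φ_m(s)` at a vector with coefficient matrix `V` is
`s_φ(Vᴴ s V)`, so `φ` is completely positive as soon as `s_φ ≥ 0` on the cone `C₁` of positive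
matrices, and co-completely positive as soon as `s_φ ≥ 0` on the cone `C₂` of matrices with positive
partial transpose. Now `J_n(S) = C₁ ∩ C₂`, and positivity of `φ_n` on `J_n(S)`, tested at the
maximally entangled vector, gives `s_φ ≥ 0` on `C₁ ∩ C₂`. It remains to write a functional that is
nonnegative on `C₁ ∩ C₂` as a sum of functionals nonnegative on `C₁` and on `C₂`. On the real space
`H` of hermitian matrices this is the Riesz extension theorem for the diagonal of `H × H` and the
cone `C₁ × C₂`, available because large multiples of the unit dominate each hermitian matrix
together with its transpose; the real summands then extend complex-linearly.
-/

open scoped ComplexOrder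
open Matrix

/-- An element of a star ring is *positive* if it equals `star b * b` for some `b`;
in a (matrix algebra over a) C*-algebra this is the usual notion of positivity. -/
def IsPosElem {R : Type*} [Ring R] [StarRing R] (x : R) : Prop :=
  ∃ b : R, x = star b * b

variable {A : Type*} [NormedRing A] [StarRing A] [CStarRing A]
  [CompleteSpace A] [NormedAlgebra ℂ A] [StarModule ℂ A]

/-- The canonical image in `Mₘ(𝒜)` of a matrix with entries in the operator system `S`. -/
def matCoe {S : Submodule ℂ A} {m : ℕ} (s : Matrix (Fin m) (Fin m) S) :
    Matrix (Fin m) (Fin m) A :=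
  Matrix.of fun j k => (s j k : A)

/-- `J_m(S)`: matrices over `S` which are positive in `Mₘ(𝒜)` together with their
partial transpose. -/
def memJ {S : Submodule ℂ A} {m : ℕ} (s : Matrix (Fin m) (Fin m) S) : Prop :=
  IsPosElem (matCoe s) ∧ IsPosElem (matCoe s)ᵀ

/-- A map `φ : S → Mₙ(ℂ)` is positive if it sends positive elements of `𝒜` lying in `S`
to positive semidefinite matrices. -/
def IsPosMap {S : Submodule ℂ A} {n : ℕ}
    (φ : S →ₗ[ℂ] Matrix (Fin n) (Fin n) ℂ) : Prop :=
  ∀ s : S, IsPosElem (s : A) → IsPosElem (φ s)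

/-- Complete positivity of `φ : S → Mₙ(ℂ)`: every positive matrix over `S` is sent,
entrywise, to a positive element of `Mₘ(Mₙ(ℂ))`. -/
def IsCPMap {S : Submodule ℂ A} {n : ℕ}
    (φ : S →ₗ[ℂ] Matrix (Fin n) (Fin n) ℂ) : Prop :=
  ∀ (m : ℕ) (s : Matrix (Fin m) (Fin m) S),
    IsPosElem (matCoe s) → IsPosElem (s.map ⇑φ)

/-- `φ` is co-completely positive if `transpose ∘ φ` is completely positive. -/
def IsCoCPMap {S : Submodule ℂ A} {n : ℕ}
    (φ : S →ₗ[ℂ] Matrix (Fin n) (Fin n) ℂ) : Prop :=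
  ∀ (m : ℕ) (s : Matrix (Fin m) (Fin m) S),
    IsPosElem (matCoe s) → IsPosElem (s.map fun a => (φ a)ᵀ)

/-- `φ` is decomposable if it is the sum of a completely positive and a
co-completely positive map. -/
noncomputable def IsDecomposable {S : Submodule ℂ A} {n : ℕ}
    (φ : S →ₗ[ℂ] Matrix (Fin n) (Fin n) ℂ) : Prop :=
  ∃ ψ η : S →ₗ[ℂ] Matrix (Fin n) (Fin n) ℂ,
    IsCPMap ψ ∧ IsCoCPMap η ∧ φ = ψ + η

/-- The dual functional `s_φ` on `Mₙ(S)`, `s_φ([x_{ij}]) = ∑_{i,j} (φ(x_{ij}))_{ij}`. -/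
noncomputable def dualFunc {S : Submodule ℂ A} {n : ℕ}
    (φ : S →ₗ[ℂ] Matrix (Fin n) (Fin n) ℂ)
    (x : Matrix (Fin n) (Fin n) S) : ℂ :=
  ∑ i, ∑ j, φ (x i j) i j

/-- The cone `S⁺ ⊗ Mₙ(ℂ)⁺` inside `Mₙ(𝒜)`: finite sums `∑ sₗ ⊗ xₗ` with `sₗ ∈ S`
positive in `𝒜` and `xₗ` positive semidefinite. -/
def posCone (S : Submodule ℂ A) (n : ℕ) : Set (Matrix (Fin n) (Fin n) A) :=
  { T | ∃ (k : ℕ) (s : Fin k → A) (x : Fin k → Matrix (Fin n) (Fin n) ℂ),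
      (∀ l, s l ∈ S ∧ IsPosElem (s l)) ∧ (∀ l, IsPosElem (x l)) ∧
      T = ∑ l, Matrix.of fun p q => x l p q • s l }

section StarRing

variable {R : Type*} [Ring R] [StarRing R]

theorem isPosElem_zero : IsPosElem (0 : R) := ⟨0, by simp⟩

theorem isPosElem_one : IsPosElem (1 : R) := ⟨1, by simp⟩

theorem IsPosElem.isSelfAdjoint {x : R} (hx : IsPosElem x) : IsSelfAdjoint x := by
  obtain ⟨b, rfl⟩ := hx
  exact .star_mul_self b

theorem IsPosElem.smul [Module ℝ R] [IsScalarTower ℝ R R] [SMulCommClass ℝ R R] [StarModule ℝ R]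
    {x : R} (hx : IsPosElem x) {c : ℝ} (hc : 0 ≤ c) : IsPosElem (c • x) := by
  obtain ⟨b, rfl⟩ := hx
  refine ⟨√c • b, ?_⟩
  rw [star_smul, smul_mul_smul_comm, star_trivial (√c), Real.mul_self_sqrt hc]

theorem isPosElem_vecMulVec_star {ι : Type*} [Fintype ι] [DecidableEq ι] (r : ι → R) :
    IsPosElem (vecMulVec (star r) r) := by
  rcases isEmpty_or_nonempty ι with _ | ⟨⟨i₀⟩⟩
  · exact ⟨0, Subsingleton.elim _ _⟩
  · refine ⟨updateRow 0 i₀ r, ?_⟩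
    ext i j
    simp [star_eq_conjTranspose, Matrix.mul_apply, vecMulVec_apply, updateRow_apply, apply_ite]

end StarRing

section CStarAlgebra

variable {B : Type*} [CStarAlgebra B]

theorem IsPosElem.add {x y : B} (hx : IsPosElem x) (hy : IsPosElem y) : IsPosElem (x + y) := by
  let _ := CStarAlgebra.spectralOrder B
  have := CStarAlgebra.spectralOrderedRing B
  simp only [IsPosElem, ← CStarAlgebra.nonneg_iff_eq_star_mul_self] at hx hy ⊢
  exact add_nonneg hx hy

theorem isPosElem_smul_one_add {x : B} (hx : IsSelfAdjoint x) {c : ℝ} (hc : ‖x‖ ≤ c) :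
    IsPosElem (c • 1 + x) := by
  let _ := CStarAlgebra.spectralOrder B
  have := CStarAlgebra.spectralOrderedRing B
  rw [IsPosElem, ← CStarAlgebra.nonneg_iff_eq_star_mul_self, ← neg_le_iff_add_nonneg,
    ← Algebra.algebraMap_eq_smul_one]
  exact (neg_le.mp hx.neg_algebraMap_norm_le_self).trans (algebraMap_mono B hc)

end CStarAlgebra

section MatrixCone

variable {ι : Type*} [Fintype ι] [DecidableEq ι]

/- The C⋆-algebra structure of `Mₙ(𝒜)` lives on the synonym `CStarMatrix`. -/
theorem IsPosElem.matrix_add {X Y : Matrix ι ι A} (hX : IsPosElem X) (hY : IsPosElem Y) :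
    IsPosElem (X + Y) := by
  let _ : CStarAlgebra A := {}
  let _ := CStarAlgebra.spectralOrder A
  have := CStarAlgebra.spectralOrderedRing A
  exact IsPosElem.add (B := CStarMatrix ι ι A) hX hY

theorem eventually_isPosElem_smul_one_add {X : Matrix ι ι A}
    (hX : X.IsHermitian) : ∀ᶠ c : ℝ in Filter.atTop, IsPosElem (c • 1 + X) := by
  let _ : CStarAlgebra A := {}
  let _ := CStarAlgebra.spectralOrder A
  have := CStarAlgebra.spectralOrderedRing A
  filter_upwards [Filter.eventually_ge_atTop ‖CStarMatrix.ofMatrix X‖] with c hc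
  exact isPosElem_smul_one_add (B := CStarMatrix ι ι A) hX hc

variable (A ι) in
/-- The convex cone of positive elements of the matrix algebra over the C⋆-algebra `A`. -/
noncomputable def posMatrixCone : PointedCone ℝ (Matrix ι ι A) where
  carrier := {X | IsPosElem X}
  zero_mem' := isPosElem_zero
  add_mem' := IsPosElem.matrix_add
  smul_mem' c _ hX := hX.smul c.2

theorem isPosElem_conjTranspose_mul_self {κ : Type*} [Fintype κ] (C : Matrix κ ι A) :
    IsPosElem (Cᴴ * C) := by
  have h_rows : Cᴴ * C = ∑ k, vecMulVec (star (C k)) (C k) := by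
    ext i j
    simp [Matrix.mul_apply, Matrix.sum_apply, vecMulVec_apply]
  rw [h_rows]
  exact sum_mem (S := posMatrixCone A ι) fun k _ => isPosElem_vecMulVec_star (C k)

theorem IsPosElem.conjTranspose_mul_mul_same {κ : Type*} [Fintype κ] [DecidableEq κ]
    {X : Matrix κ κ A} (hX : IsPosElem X) (V : Matrix κ ι A) : IsPosElem (Vᴴ * X * V) := by
  obtain ⟨b, rfl⟩ := hX
  simpa only [star_eq_conjTranspose, conjTranspose_mul, Matrix.mul_assoc] using
    isPosElem_conjTranspose_mul_self (b * V)

end MatrixCone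

section BlockMatrix

variable {ι κ : Type*} [Fintype ι] [Fintype κ]

/-- Over `ℂ`, hermitianness follows from the quadratic form being real. -/
theorem posSemidef_of_forall_dotProduct_mulVec_nonneg {M : Matrix ι ι ℂ}
    (hM : ∀ v, 0 ≤ star v ⬝ᵥ (M *ᵥ v)) : M.PosSemidef := by
  classical
  rw [← Matrix.isPositive_toEuclideanLin_iff, LinearMap.isPositive_iff_complex]
  intro v
  have h_inner : inner ℂ (M.toEuclideanLin v) v = star (star v.ofLp ⬝ᵥ (M *ᵥ v.ofLp)) := by
    rw [← inner_conj_symm, EuclideanSpace.inner_eq_star_dotProduct, dotProduct_comm]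
    rfl
  have h_nonneg : 0 ≤ inner ℂ (M.toEuclideanLin v) v := h_inner ▸ star_nonneg_iff.mpr (hM v.ofLp)
  exact ⟨Complex.ext rfl (Complex.le_def.mp h_nonneg).2, (Complex.le_def.mp h_nonneg).1⟩

theorem isPosElem_iff_posSemidef_comp [DecidableEq ι] [DecidableEq κ] {𝕜 : Type*} [RCLike 𝕜]
    {X : Matrix ι ι (Matrix κ κ 𝕜)} : IsPosElem X ↔ (comp ι ι κ κ 𝕜 X).PosSemidef := by
  have h_comp (b : Matrix ι ι (Matrix κ κ 𝕜)) :
      comp ι ι κ κ 𝕜 (star b * b) = star (comp ι ι κ κ 𝕜 b) * comp ι ι κ κ 𝕜 b :=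
    map_mul (compRingEquiv ι κ 𝕜) (star b) b
  open scoped MatrixOrder Matrix.Norms.L2Operator in
  rw [← nonneg_iff_posSemidef, CStarAlgebra.nonneg_iff_eq_star_mul_self,
    ← (comp ι ι κ κ 𝕜).exists_congr_right]
  simp only [← h_comp, EmbeddingLike.apply_eq_iff_eq, IsPosElem]

end BlockMatrix

section DualFunctional

variable {S : Submodule ℂ A} {n : ℕ}

omit [StarRing A] [CStarRing A] [CompleteSpace A] [StarModule ℂ A] in
theorem dualFunc_single (φ : S →ₗ[ℂ] Matrix (Fin n) (Fin n) ℂ) (i j : Fin n) (a : S) :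
    dualFunc φ (single i j a) = φ a i j := by
  rw [dualFunc, Fintype.sum_eq_single i, Fintype.sum_eq_single j, single_apply_same]
  · intro j' hj
    simp [hj.symm]
  · intro i' hi
    simp [hi.symm]

/-- The correspondence `φ ↔ s_φ` between maps `S → Mₙ(ℂ)` and functionals on `Mₙ(S)`. -/
noncomputable def dualFuncEquiv :
    (S →ₗ[ℂ] Matrix (Fin n) (Fin n) ℂ) ≃ₗ[ℂ] (Matrix (Fin n) (Fin n) S →ₗ[ℂ] ℂ) where
  __ := LinearMap.mk₂ ℂ dualFunc
    (by simp [dualFunc, Finset.sum_add_distrib]) (by simp [dualFunc, Finset.mul_sum])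
    (by simp [dualFunc, Finset.sum_add_distrib]) (by simp [dualFunc, Finset.mul_sum])
  invFun f :=
    { toFun := fun a => of fun i j => f (single i j a)
      map_add' := fun a b => by ext i j; simp [single_add]
      map_smul' := fun c a => by ext i j; simp [← smul_single] }
  left_inv φ := LinearMap.ext fun a => Matrix.ext fun i j => dualFunc_single φ i j a
  right_inv f := LinearMap.ext fun X => by
    conv_rhs => rw [matrix_eq_sum_single X]
    simp only [map_sum]
    rfl

omit [StarRing A] [CStarRing A] [CompleteSpace A] [StarModule ℂ A] in
theorem dualFuncEquiv_apply (φ : S →ₗ[ℂ] Matrix (Fin n) (Fin n) ℂ)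
    (X : Matrix (Fin n) (Fin n) S) : dualFuncEquiv φ X = dualFunc φ X := rfl

/-- The compression `Vᴴ s V` by a scalar matrix `V`. The entries of `s` need only lie in a complex
vector space, so that compressing a matrix over `S` gives a matrix over `S`. -/
noncomputable def scalarCompression {ι κ M : Type*} [Fintype ι] [AddCommGroup M] [Module ℂ M]
    (V : Matrix ι κ ℂ) (s : Matrix ι ι M) : Matrix κ κ M :=
  of fun a c => ∑ j, ∑ k, (star (V j a) * V k c) • s j k

omit [CStarRing A] [CompleteSpace A] in
theorem matCoe_scalarCompression {m : ℕ} (V : Matrix (Fin m) (Fin n) ℂ)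
    (s : Matrix (Fin m) (Fin m) S) :
    matCoe (scalarCompression V s) =
      (V.map (algebraMap ℂ A))ᴴ * matCoe s * V.map (algebraMap ℂ A) := by
  ext a c
  simp only [matCoe, scalarCompression, of_apply, Matrix.mul_apply, conjTranspose_apply, map_apply,
    ← algebraMap_star_comm, Finset.sum_mul, Submodule.coe_sum, Submodule.coe_smul]
  rw [Finset.sum_comm]
  refine Finset.sum_congr rfl fun j _ => Finset.sum_congr rfl fun k _ => ?_
  rw [← Algebra.smul_def, ← Algebra.commutes, ← Algebra.smul_def, smul_smul, mul_comm]

omit [StarRing A] [CStarRing A] [CompleteSpace A] [StarModule ℂ A] in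
theorem dotProduct_comp_map_mulVec {m : ℕ} (φ : S →ₗ[ℂ] Matrix (Fin n) (Fin n) ℂ)
    (s : Matrix (Fin m) (Fin m) S) (v : Fin m × Fin n → ℂ) :
    star v ⬝ᵥ (comp _ _ _ _ ℂ (s.map φ) *ᵥ v) =
      dualFunc φ (scalarCompression (of fun j a => v (j, a)) s) := by
  simp only [dotProduct, mulVec, Fintype.sum_prod_type, dualFunc, scalarCompression, of_apply,
    map_sum, map_smul, Matrix.sum_apply, Matrix.smul_apply, comp_apply, map_apply, Pi.star_apply,
    Finset.mul_sum, smul_eq_mul]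
  rw [Finset.sum_comm]
  refine Finset.sum_congr rfl fun a _ => ?_
  rw [Finset.sum_comm_cycle]
  refine Finset.sum_congr rfl fun b _ => Finset.sum_congr rfl fun j _ =>
    Finset.sum_congr rfl fun k _ => ?_
  ring

theorem isCPMap_of_dualFunc_nonneg {φ : S →ₗ[ℂ] Matrix (Fin n) (Fin n) ℂ}
    (hφ : ∀ X, IsPosElem (matCoe X) → 0 ≤ dualFunc φ X) : IsCPMap φ := by
  intro m s hs
  refine isPosElem_iff_posSemidef_comp.mpr <|
    posSemidef_of_forall_dotProduct_mulVec_nonneg fun v => ?_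
  rw [dotProduct_comp_map_mulVec]
  apply hφ
  rw [matCoe_scalarCompression]
  exact hs.conjTranspose_mul_mul_same _

theorem isCoCPMap_of_dualFunc_nonneg {φ : S →ₗ[ℂ] Matrix (Fin n) (Fin n) ℂ}
    (hφ : ∀ X, IsPosElem (matCoe X)ᵀ → 0 ≤ dualFunc φ X) : IsCoCPMap φ := by
  have h_transpose (X : Matrix (Fin n) (Fin n) S) :
      dualFunc ((transposeLinearEquiv (Fin n) (Fin n) ℂ ℂ).toLinearMap ∘ₗ φ) X = dualFunc φ Xᵀ :=
    Finset.sum_comm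
  exact isCPMap_of_dualFunc_nonneg fun X hX => h_transpose X ▸ hφ Xᵀ hX

omit [StarRing A] [CStarRing A] [CompleteSpace A] [StarModule ℂ A] in
/-- `s_φ(X)` is the quadratic form of `φₙ(X)` at the maximally entangled vector `∑ eᵢ ⊗ eᵢ`. -/
theorem dualFunc_nonneg {φ : S →ₗ[ℂ] Matrix (Fin n) (Fin n) ℂ} {X : Matrix (Fin n) (Fin n) S}
    (hX : IsPosElem (X.map φ)) : 0 ≤ dualFunc φ X := by
  have h_form := (isPosElem_iff_posSemidef_comp.mp hX).dotProduct_mulVec_nonneg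
    fun p => if p.1 = p.2 then 1 else 0
  simpa [dualFunc, dotProduct, mulVec, Fintype.sum_prod_type, apply_ite star] using h_form

omit [CStarRing A] [CompleteSpace A] [StarModule ℂ A] in
theorem IsDecomposable.isPosElem_map {φ : S →ₗ[ℂ] Matrix (Fin n) (Fin n) ℂ}
    (hφ : IsDecomposable φ) {m : ℕ} {s : Matrix (Fin m) (Fin m) S} (hs : memJ s) :
    IsPosElem (s.map φ) := by
  obtain ⟨ψ, η, hψ, hη, rfl⟩ := hφ
  have h_cp : (comp _ _ _ _ ℂ (s.map ψ)).PosSemidef :=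
    isPosElem_iff_posSemidef_comp.mp (hψ m s hs.1)
  have h_cocp : (comp _ _ _ _ ℂ (s.map η)).PosSemidef :=
    (isPosElem_iff_posSemidef_comp.mp (hη m sᵀ hs.2)).transpose
  exact isPosElem_iff_posSemidef_comp.mpr (h_cp.add h_cocp)

end DualFunctional

section DualCone

open Pointwise in
/-- Riesz extension from the diagonal of `V × V`, on which the cone `C₁ × C₂` traces `C₁ ⊓ C₂`. -/
theorem exists_add_eq_of_nonneg_on_inf {V : Type*} [AddCommGroup V] [Module ℝ V]
    {C₁ C₂ : PointedCone ℝ V} (hC : (C₁ : Set V) - (C₂ : Set V) = Set.univ) {F : V →ₗ[ℝ] ℝ}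
    (hF : ∀ v ∈ C₁ ⊓ C₂, 0 ≤ F v) :
    ∃ f g : V →ₗ[ℝ] ℝ, F = f + g ∧ (∀ v ∈ C₁, 0 ≤ f v) ∧ ∀ v ∈ C₂, 0 ≤ g v := by
  let diagonal : Submodule ℝ (V × V) := LinearMap.eqLocus (.fst ℝ V V) (.snd ℝ V V)
  obtain ⟨G, hG_diagonal, hG_nonneg⟩ := riesz_extension (C₁.prod C₂ : PointedCone ℝ (V × V))
    ⟨diagonal, F ∘ₗ .fst ℝ V V ∘ₗ diagonal.subtype⟩
    (by
      rintro ⟨⟨v, w⟩, (rfl : v = w)⟩ hv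
      exact hF v hv)
    (by
      rintro ⟨v, w⟩
      obtain ⟨p, hp, q, hq, (h_sub : p - q = v - w)⟩ := hC.ge (Set.mem_univ (v - w))
      have h_add : p - v + w = q := by rw [sub_add, ← h_sub, sub_sub_cancel]
      exact ⟨⟨(p - v, p - v), rfl⟩, by simpa using hp, by simpa [h_add] using hq⟩)
  refine ⟨G ∘ₗ .inl ℝ V V, G ∘ₗ .inr ℝ V V, ?_, fun v hv => ?_, fun v hv => ?_⟩
  · ext v
    have h := hG_diagonal ⟨(v, v), rfl⟩
    simpa [← map_add] using h.symm
  · exact hG_nonneg _ ⟨hv, C₂.zero_mem⟩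
  · exact hG_nonneg _ ⟨C₁.zero_mem, hv⟩

variable {V : Type*} [AddCommGroup V] [Module ℂ V] [Module ℝ V] [IsScalarTower ℝ ℂ V]
  {H : Submodule ℝ V}

theorem exists_complexLinear_extension (hH : ∀ x ∈ H, Complex.I • x ∈ H → x = 0)
    (f : H →ₗ[ℝ] ℝ) : ∃ G : V →ₗ[ℂ] ℂ, ∀ x : H, G x = f x := by
  let mulI : V →ₗ[ℝ] V := (LinearMap.lsmul ℂ V Complex.I).restrictScalars ℝ
  have h_disjoint : Disjoint H (H.map mulI) := by
    rw [Submodule.disjoint_def]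
    rintro _ hx ⟨y, hy, rfl⟩
    rw [hH y hy hx, map_zero]
  obtain ⟨K, hK, h_compl⟩ := h_disjoint.symm.exists_isCompl
  let re_G : V →ₗ[ℝ] ℝ := f ∘ₗ H.projectionOnto K h_compl.symm
  refine ⟨Module.Dual.extendRCLike re_G, fun x => ?_⟩
  have h_re : re_G x = f x := by
    simp [re_G]
  have h_im : re_G (Complex.I • (x : V)) = 0 := by
    change f (H.projectionOnto K h_compl.symm (mulI x)) = 0
    rw [(H.projectionOnto_apply_eq_zero_iff h_compl.symm).mpr (hK ⟨x, x.2, rfl⟩), map_zero]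
  rw [Module.Dual.extendRCLike_apply]
  simp [h_re, h_im]

theorem exists_complexLinear_add_eq_of_nonneg_on_inf
    (hH : ∀ x ∈ H, Complex.I • x ∈ H → x = 0) {C₁ C₂ : PointedCone ℝ V}
    (hC₁ : ∀ x ∈ C₁, x ∈ H) (hC₂ : ∀ x ∈ C₂, x ∈ H)
    (hC : ∀ x ∈ H, ∃ p ∈ C₁ ⊓ C₂, ∃ q ∈ C₁ ⊓ C₂, p - q = x)
    {F : V →ₗ[ℂ] ℂ} (hF : ∀ x ∈ C₁ ⊓ C₂, 0 ≤ F x) :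
    ∃ f g : V →ₗ[ℂ] ℂ, F = f + g ∧ (∀ x ∈ C₁, 0 ≤ f x) ∧ ∀ x ∈ C₂, 0 ≤ g x := by
  let re_F : H →ₗ[ℝ] ℝ := Complex.reLm ∘ₗ F.restrictScalars ℝ ∘ₗ H.subtype
  have h_real (x : H) : F x = re_F x := by
    obtain ⟨p, hp, q, hq, h_sub⟩ := hC x x.2
    refine Complex.ext rfl ?_
    have hp_im := (Complex.le_def.mp (hF p hp)).2
    have hq_im := (Complex.le_def.mp (hF q hq)).2
    simp [← h_sub, ← hp_im, ← hq_im]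
  obtain ⟨f₀, g₀, h_add, hf₀, hg₀⟩ := exists_add_eq_of_nonneg_on_inf
    (C₁ := C₁.comap H.subtype) (C₂ := C₂.comap H.subtype) (F := re_F)
    (Set.eq_univ_of_forall fun x => by
      obtain ⟨p, hp, q, hq, h_sub⟩ := hC x x.2
      exact ⟨⟨p, hC₁ p hp.1⟩, hp.1, ⟨q, hC₁ q hq.1⟩, hq.2, Subtype.ext h_sub⟩)
    (fun x hx => (Complex.le_def.mp (hF x hx)).1)
  obtain ⟨f, hf⟩ := exists_complexLinear_extension hH f₀
  refine ⟨f, F - f, (add_sub_cancel f F).symm, fun x hx => ?_, fun x hx => ?_⟩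
  · rw [hf ⟨x, hC₁ x hx⟩]
    exact_mod_cast hf₀ ⟨x, hC₁ x hx⟩ hx
  · have h_eq : (F - f) x = g₀ ⟨x, hC₂ x hx⟩ := by
      rw [LinearMap.sub_apply, h_real ⟨x, hC₂ x hx⟩, hf ⟨x, hC₂ x hx⟩, h_add]
      simp
    rw [h_eq]
    exact_mod_cast hg₀ ⟨x, hC₂ x hx⟩ hx

end DualCone

section PartialTranspose

variable {S : Submodule ℂ A} {n : ℕ}

variable (S n) in
/-- The cone of matrices over `S` that are positive in `Mₙ(𝒜)`; it tests complete positivity. -/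
noncomputable def posMatrixConeOver : PointedCone ℝ (Matrix (Fin n) (Fin n) S) :=
  (posMatrixCone A (Fin n)).comap (S.subtype.restrictScalars ℝ).mapMatrix

variable (S n) in
/-- The cone of matrices over `S` whose partial transpose is positive in `Mₙ(𝒜)`; it tests
co-complete positivity, and its intersection with `posMatrixConeOver S n` is `Jₙ(S)`. -/
noncomputable def posTransposeMatrixConeOver : PointedCone ℝ (Matrix (Fin n) (Fin n) S) :=
  (posMatrixConeOver S n).comap (transposeLinearEquiv (Fin n) (Fin n) ℝ S).toLinearMap

variable (S n) in
/-- The real vector space of matrices over `S` that are hermitian in `Mₙ(𝒜)`, on which the Riesz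
extension is carried out. -/
noncomputable def hermitianPart : Submodule ℝ (Matrix (Fin n) (Fin n) S) :=
  (selfAdjoint.submodule ℝ (Matrix (Fin n) (Fin n) A)).comap
    (S.subtype.restrictScalars ℝ).mapMatrix

omit [CStarRing A] [CompleteSpace A] in
theorem eq_zero_of_I_smul_mem_hermitianPart {X : Matrix (Fin n) (Fin n) S}
    (hX : X ∈ hermitianPart S n) (hIX : Complex.I • X ∈ hermitianPart S n) : X = 0 := by
  have h_star : star (matCoe X) = matCoe X := hX
  have h_star_I : star (Complex.I • matCoe X) = Complex.I • matCoe X := hIX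
  rw [star_smul, h_star, ← sub_eq_zero, ← sub_smul, smul_eq_zero,
    or_iff_right (by norm_num [Complex.ext_iff])] at h_star_I
  exact Matrix.ext fun i j => Subtype.ext (congrFun₂ h_star_I i j)

theorem exists_sub_eq_of_mem_hermitianPart (h_one : (1 : A) ∈ S) {X : Matrix (Fin n) (Fin n) S}
    (hX : X ∈ hermitianPart S n) : ∃ P Q, memJ P ∧ memJ Q ∧ P - Q = X := by
  have h_star : (matCoe X).IsHermitian := hX
  let unit : Matrix (Fin n) (Fin n) S := diagonal fun _ => ⟨1, h_one⟩
  have h_unit : matCoe unit = 1 := by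
    ext i j
    obtain rfl | hij := eq_or_ne i j <;> simp_all [unit, matCoe]
  obtain ⟨c, ⟨h_pos, h_pos_transpose⟩, hc⟩ :=
    (((eventually_isPosElem_smul_one_add h_star).and
      (eventually_isPosElem_smul_one_add h_star.transpose)).and
      (Filter.eventually_ge_atTop 0)).exists
  have h_coe : matCoe (c • unit + X) = c • 1 + matCoe X := h_unit ▸ rfl
  have h_coe_unit : matCoe (c • unit) = c • 1 := h_unit ▸ rfl
  refine ⟨c • unit + X, c • unit, ⟨?_, ?_⟩, ⟨?_, ?_⟩, add_sub_cancel_left _ _⟩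
  · rwa [h_coe]
  · rwa [h_coe, transpose_add, transpose_smul, transpose_one]
  · rw [h_coe_unit]
    exact isPosElem_one.smul hc
  · rw [h_coe_unit, transpose_smul, transpose_one]
    exact isPosElem_one.smul hc

theorem exists_add_eq_of_nonneg_on_J (h_one : (1 : A) ∈ S)
    {F : Matrix (Fin n) (Fin n) S →ₗ[ℂ] ℂ} (hF : ∀ X, memJ X → 0 ≤ F X) :
    ∃ f g : Matrix (Fin n) (Fin n) S →ₗ[ℂ] ℂ, F = f + g ∧
      (∀ X, IsPosElem (matCoe X) → 0 ≤ f X) ∧ ∀ X, IsPosElem (matCoe X)ᵀ → 0 ≤ g X :=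
  exists_complexLinear_add_eq_of_nonneg_on_inf (H := hermitianPart S n)
    (C₁ := posMatrixConeOver S n) (C₂ := posTransposeMatrixConeOver S n)
    (fun _ => eq_zero_of_I_smul_mem_hermitianPart)
    (fun _ hX => IsPosElem.isSelfAdjoint hX)
    (fun _ hX => IsHermitian.transpose (IsPosElem.isSelfAdjoint hX))
    (fun _ hX => by
      obtain ⟨P, Q, hP, hQ, h_sub⟩ := exists_sub_eq_of_mem_hermitianPart h_one hX
      exact ⟨P, hP, Q, hQ, h_sub⟩)
    hF

end PartialTranspose

theorem decomposable_iff_posElem_on_J_general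
    (S : Submodule ℂ A) (h_one : (1 : A) ∈ S) (n : ℕ)
    (φ : S →ₗ[ℂ] Matrix (Fin n) (Fin n) ℂ) :
    IsDecomposable φ ↔
      (∀ (m : ℕ) (s : Matrix (Fin m) (Fin m) S), memJ s → IsPosElem (s.map ⇑φ)) := by
  refine ⟨fun hφ m s hs => hφ.isPosElem_map hs, fun hφ => ?_⟩
  obtain ⟨f, g, h_add, hf, hg⟩ := exists_add_eq_of_nonneg_on_J h_one (F := dualFuncEquiv φ)
    fun X hX => dualFunc_nonneg (hφ n X hX)
  refine ⟨dualFuncEquiv.symm f, dualFuncEquiv.symm g, isCPMap_of_dualFunc_nonneg fun X hX => ?_,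
    isCoCPMap_of_dualFunc_nonneg fun X hX => ?_, ?_⟩
  · rw [← dualFuncEquiv_apply, LinearEquiv.apply_symm_apply]
    exact hf X hX
  · rw [← dualFuncEquiv_apply, LinearEquiv.apply_symm_apply]
    exact hg X hX
  · rw [← map_add, ← h_add, LinearEquiv.symm_apply_apply]

/-- `φ` is decomposable iff `φ_m(S) ⪰ 0` for every `m` and every `S ∈ J_m(S)`. -/
theorem decomposable_iff_posElem_on_J
    (S : Submodule ℂ A) (h_one : (1 : A) ∈ S) (h_star : ∀ a ∈ S, star a ∈ S)
    (n : ℕ) (φ : S →ₗ[ℂ] Matrix (Fin n) (Fin n) ℂ) :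
    IsDecomposable φ ↔
      (∀ (m : ℕ) (s : Matrix (Fin m) (Fin m) S), memJ s → IsPosElem (s.map ⇑φ)) :=
  decomposable_iff_posElem_on_J_general S h_one n φ
end

section
/- Let 𝒜 be a unital C*-algebra, 𝒮 ⊆ 𝒜 an operator system, and φ: 𝒮 → M_n(ℂ) a linear map. If the dual functional s_φ satisfies s_φ(T) ≥ 0 for every T ∈ J_n(𝒮), then for every positive integer m and every S = [s_{jk}] ∈ J_m(𝒮), the matrix φ_m(S) = [φ(s_{jk})] is positive semidefinite. -/
/-!
For `x ∈ ℂᵐ ⊗ ℂⁿ`, viewed as a scalar `m × n` matrix `X`, put `T = X* s X ∈ Mₙ(S)`. Then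
`⟨x, φ_m(s) x⟩ = s_φ(T)`, so it is enough to see that `T ∈ Jₙ(S)`. If `s = b* b` then
`T = (bX)* (bX)`, and the transpose of `T` is `X̄* sᵗ X̄`, which has the same shape. Since `bX` is
rectangular, a square factor has to be produced: `(bX)* (bX)` is the sum over the rows `v` of `bX`
of the matrices `v* v`. Each of these is `d* d`, where `d ∈ Mₙ(𝒜)` has `v` as one row and zeros
elsewhere, and in a C*-algebra a sum of elements `d* d` is again of this form.
-/

open scoped ComplexOrder
open Matrix

variable {A : Type*} [NormedRing A] [StarRing A] [CStarRing A]
  [CompleteSpace A] [NormedAlgebra ℂ A] [StarModule ℂ A]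

section Positivity

variable {ι R T B : Type*}

lemma IsPosElem.map [Ring R] [StarRing R] [Ring T] [StarRing T] {F : Type*} [FunLike F R T]
    [MulHomClass F R T] [StarHomClass F R T] (f : F) {x : R} (hx : IsPosElem x) :
    IsPosElem (f x) := by
  obtain ⟨b, rfl⟩ := hx
  exact ⟨f b, by rw [map_mul, map_star]⟩

lemma IsPosElem.sum [CStarAlgebra B] {s : Finset ι} {x : ι → B}
    (hx : ∀ i ∈ s, IsPosElem (x i)) : IsPosElem (∑ i ∈ s, x i) := by
  let _ : PartialOrder B := CStarAlgebra.spectralOrder B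
  have : StarOrderedRing B := CStarAlgebra.spectralOrderedRing B
  exact CStarAlgebra.nonneg_iff_eq_star_mul_self.mp <|
    Finset.sum_nonneg fun i hi ↦ CStarAlgebra.nonneg_iff_eq_star_mul_self.mpr (hx i hi)

lemma IsPosElem.sum_matrix {n : Type*} [Fintype n] [DecidableEq n] [CStarAlgebra B]
    {s : Finset ι} {M : ι → Matrix n n B} (hM : ∀ i ∈ s, IsPosElem (M i)) :
    IsPosElem (∑ i ∈ s, M i) := by
  let _ : PartialOrder B := CStarAlgebra.spectralOrder B
  have : StarOrderedRing B := CStarAlgebra.spectralOrderedRing B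
  have hsum := IsPosElem.sum fun i hi ↦ (hM i hi).map CStarMatrix.ofMatrixStarAlgEquiv
  rw [← map_sum] at hsum
  exact hsum.map CStarMatrix.ofMatrixStarAlgEquiv.symm

end Positivity

section Matrix

variable {m n B : Type*} [Fintype m] [Fintype n] [DecidableEq n]

lemma isPosElem_vecMulVec_star_self [Ring B] [StarRing B] (v : n → B) :
    IsPosElem (vecMulVec (star v) v) := by
  cases isEmpty_or_nonempty n with
  | inl _ => exact ⟨0, Subsingleton.elim _ _⟩
  | inr hn =>
    obtain ⟨i⟩ := hn
    refine ⟨vecMulVec (Pi.single i 1) v, ?_⟩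
    rw [star_eq_conjTranspose, mul_vecMulVec, mulVec_single_one]
    congr 1
    ext p
    simp [vecMulVec_apply]

lemma isPosElem_conjTranspose_mul_self_s5 [CStarAlgebra B] (C : Matrix m n B) :
    IsPosElem (Cᴴ * C) := by
  have hrows : Cᴴ * C = ∑ j, vecMulVec (star (C j)) (C j) := by
    ext p q
    simp [mul_apply, Matrix.sum_apply, vecMulVec_apply]
  rw [hrows]
  exact IsPosElem.sum_matrix fun j _ ↦ isPosElem_vecMulVec_star_self (C j)

lemma IsPosElem.conjTranspose_mul_mul_same_s5 [DecidableEq m] [CStarAlgebra B] {M : Matrix m m B}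
    (hM : IsPosElem M) (C : Matrix m n B) : IsPosElem (Cᴴ * M * C) := by
  obtain ⟨b, rfl⟩ := hM
  convert isPosElem_conjTranspose_mul_self_s5 (b * C) using 1
  rw [conjTranspose_mul, star_eq_conjTranspose]
  simp only [Matrix.mul_assoc]

end Matrix

section Compression

variable {m n R V W B : Type*} [Fintype m] [CommSemiring R] [StarRing R]

/-- The compression `X* s X` of a matrix `s` over an `R`-module by a rectangular scalar matrix `X`;
it serves to pass from `Jₘ(S)` to `Jₙ(S)`. It is written out in entries because elements of a
module, such as an operator system, cannot be multiplied. -/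
def compression [AddCommMonoid V] [Module R V] (X : Matrix m n R) (s : Matrix m m V) :
    Matrix n n V :=
  Matrix.of fun p q ↦ ∑ j, ∑ k, (star (X j p) * X k q) • s j k

lemma compression_apply [AddCommMonoid V] [Module R V] (X : Matrix m n R) (s : Matrix m m V)
    (p q : n) : compression X s p q = ∑ j, ∑ k, (star (X j p) * X k q) • s j k :=
  rfl

lemma compression_transpose [AddCommMonoid V] [Module R V] (X : Matrix m n R) (s : Matrix m m V) :
    (compression X s)ᵀ = compression (X.map star) sᵀ := by
  ext p q
  simp only [transpose_apply, compression_apply, map_apply, star_star]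
  rw [Finset.sum_comm]
  simp only [mul_comm]

lemma compression_map [AddCommMonoid V] [Module R V] [AddCommMonoid W] [Module R W]
    (f : V →ₗ[R] W) (X : Matrix m n R) (s : Matrix m m V) :
    (compression X s).map f = compression X (s.map f) := by
  ext p q
  simp only [map_apply, compression_apply, map_sum, map_smul]

lemma compression_eq_conjTranspose_mul_mul [Ring B] [StarRing B] [Algebra R B] [StarModule R B]
    (X : Matrix m n R) (M : Matrix m m B) :
    compression X M = (X.map (algebraMap R B))ᴴ * M * X.map (algebraMap R B) := by
  ext p q
  simp only [compression_apply, mul_apply, conjTranspose_apply, map_apply, ← algebraMap_star_comm,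
    Finset.sum_mul]
  rw [Finset.sum_comm]
  refine Finset.sum_congr rfl fun k _ ↦ Finset.sum_congr rfl fun j _ ↦ ?_
  rw [← Algebra.commutes (X k q), ← Algebra.smul_def, ← Algebra.smul_def, smul_smul, mul_comm]

lemma dotProduct_comp_map_mulVec_s5 [Fintype n] [AddCommMonoid V] [Module R V]
    (φ : V →ₗ[R] Matrix n n R) (s : Matrix m m V) (x : m × n → R) :
    star x ⬝ᵥ (comp m m n n R (s.map φ) *ᵥ x) =
      ∑ p, ∑ q, φ (compression (Matrix.of (Function.curry x)) s p q) p q := by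
  calc
    _ = ∑ j, ∑ p, ∑ k, ∑ q, star (x (j, p)) * (φ (s j k) p q * x (k, q)) := by
      simp only [dotProduct, mulVec, Fintype.sum_prod_type, comp_apply, map_apply, Pi.star_apply,
        Finset.mul_sum]
    _ = ∑ p, ∑ q, ∑ j, ∑ k, star (x (j, p)) * (φ (s j k) p q * x (k, q)) := by
      rw [Finset.sum_comm]
      refine Finset.sum_congr rfl fun p _ ↦ ?_
      exact (Finset.sum_congr rfl fun j _ ↦ Finset.sum_comm).trans Finset.sum_comm
    _ = _ := by
      simp only [compression_apply, map_sum, map_smul, Matrix.sum_apply, Matrix.smul_apply,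
        smul_eq_mul, of_apply, Function.curry_apply, mul_assoc, mul_comm (x _)]

lemma IsPosElem.compress [DecidableEq m] [Fintype n] [DecidableEq n] [CStarAlgebra B]
    {M : Matrix m m B} (hM : IsPosElem M) (X : Matrix m n ℂ) : IsPosElem (compression X M) := by
  rw [compression_eq_conjTranspose_mul_mul]
  exact hM.conjTranspose_mul_mul_same_s5 _

lemma memJ.compress {S : Submodule ℂ A} {m n : ℕ} {s : Matrix (Fin m) (Fin m) S} (hs : memJ s)
    (X : Matrix (Fin m) (Fin n) ℂ) : memJ (compression X s) := by
  let _ : CStarAlgebra A := {}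
  have hcoe : matCoe (compression X s) = compression X (matCoe s) :=
    compression_map S.subtype X s
  refine ⟨?_, ?_⟩
  · rw [hcoe]
    exact hs.1.compress X
  · rw [hcoe, compression_transpose]
    exact hs.2.compress (X.map star)

end Compression

section Scalar

variable {m n : Type*} [Fintype m] [Fintype n]

lemma posSemidef_of_dotProduct_mulVec_nonneg {M : Matrix n n ℂ}
    (h : ∀ x : n → ℂ, 0 ≤ star x ⬝ᵥ (M *ᵥ x)) : M.PosSemidef := by
  classical
  rw [← isPositive_toEuclideanLin_iff, LinearMap.isPositive_iff_complex]
  intro x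
  have hinner : 0 ≤ inner ℂ (M.toEuclideanLin x) x := by
    rw [EuclideanSpace.inner_eq_star_dotProduct, dotProduct_star, star_nonneg_iff, dotProduct_comm]
    exact h x.ofLp
  obtain ⟨hre, him⟩ := RCLike.nonneg_iff.mp hinner
  exact ⟨RCLike.conj_eq_iff_re.mp (RCLike.conj_eq_iff_im.mpr him), hre⟩

variable [DecidableEq m] [DecidableEq n]

open scoped MatrixOrder in
lemma isPosElem_of_posSemidef {𝕜 : Type*} [RCLike 𝕜] {M : Matrix n n 𝕜} (hM : M.PosSemidef) :
    IsPosElem M :=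
  CStarAlgebra.nonneg_iff_eq_star_mul_self.mp hM.nonneg

lemma isPosElem_of_isPosElem_comp {R : Type*} [Ring R] [StarRing R]
    {M : Matrix m m (Matrix n n R)} (hM : IsPosElem (comp m m n n R M)) : IsPosElem M := by
  let e : Matrix m m (Matrix n n R) ≃⋆+* Matrix (m × n) (m × n) R :=
    { compRingEquiv m n R with map_star' := fun _ ↦ rfl }
  exact hM.map e.symm

end Scalar

theorem posElem_on_J_of_dualFunc_nonneg_general (S : Submodule ℂ A)
    (n : ℕ) (φ : S →ₗ[ℂ] Matrix (Fin n) (Fin n) ℂ)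
    (hφ : ∀ T : Matrix (Fin n) (Fin n) S, memJ T → 0 ≤ dualFunc φ T) :
    ∀ (m : ℕ) (s : Matrix (Fin m) (Fin m) S), memJ s → IsPosElem (s.map ⇑φ) := by
  intro m s hs
  apply isPosElem_of_isPosElem_comp
  apply isPosElem_of_posSemidef
  apply posSemidef_of_dotProduct_mulVec_nonneg
  intro x
  rw [dotProduct_comp_map_mulVec_s5, ← dualFunc]
  exact hφ _ (hs.compress _)

/-- if the dual functional of `φ` is nonnegative on `Jₙ(S)`, then
`φ_m(S) ⪰ 0` for every `m` and every `S ∈ J_m(S)`. -/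
theorem posElem_on_J_of_dualFunc_nonneg
    (S : Submodule ℂ A) (h_one : (1 : A) ∈ S) (h_star : ∀ a ∈ S, star a ∈ S)
    (n : ℕ) (φ : S →ₗ[ℂ] Matrix (Fin n) (Fin n) ℂ)
    (hφ : ∀ T : Matrix (Fin n) (Fin n) S, memJ T → 0 ≤ dualFunc φ T) :
    ∀ (m : ℕ) (s : Matrix (Fin m) (Fin m) S), memJ s → IsPosElem (s.map ⇑φ) :=
  posElem_on_J_of_dualFunc_nonneg_general S n φ hφ
end

section
/- For every real μ ≥ 1, the Choi-type map φ: M_3(ℂ) → M_3(ℂ) defined by φ([x_{ij}]) = [[x_{11}, −x_{12}, −x_{13}], [−x_{21}, x_{22}, −x_{23}], [−x_{31}, −x_{32}, x_{33}]] + μ·diag(x_{33}, x_{11}, x_{22}) is not decomposable: there do not exist a completely positive map ψ and a co-cp map η with φ = ψ + η. -/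
open Matrix

/-- Complete positivity for a linear map `φ : M_3(ℂ) → M_3(ℂ)`. -/
def IsCPMap3 (φ : Matrix (Fin 3) (Fin 3) ℂ →ₗ[ℂ] Matrix (Fin 3) (Fin 3) ℂ) : Prop :=
  ∀ (m : ℕ) (s : Matrix (Fin m) (Fin m) (Matrix (Fin 3) (Fin 3) ℂ)),
    IsPosElem s → IsPosElem (s.map ⇑φ)

/-- `φ` is co-completely positive if `transpose ∘ φ` is completely positive. -/
def IsCoCPMap3 (φ : Matrix (Fin 3) (Fin 3) ℂ →ₗ[ℂ] Matrix (Fin 3) (Fin 3) ℂ) : Prop :=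
  ∀ (m : ℕ) (s : Matrix (Fin m) (Fin m) (Matrix (Fin 3) (Fin 3) ℂ)),
    IsPosElem s → IsPosElem (s.map fun a => (φ a)ᵀ)

/-- The Choi-type map
`φ([x_{ij}]) = [[x₁₁, -x₁₂, -x₁₃], [-x₂₁, x₂₂, -x₂₃], [-x₃₁, -x₃₂, x₃₃]]
  + μ·diag(x₃₃, x₁₁, x₂₂)`. -/
noncomputable def choiFun (μ : ℝ) (x : Matrix (Fin 3) (Fin 3) ℂ) :
    Matrix (Fin 3) (Fin 3) ℂ :=
  Matrix.of (fun i j => if i = j then x i i else -x i j) +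
    (μ : ℂ) • Matrix.diagonal ![x 2 2, x 0 0, x 1 1]

/-!
Write `E i j` for the matrix units. If `φ = ψ + η` with `ψ` cp and `η` co-cp, then the Choi matrix
of `φ` is `A + B` with `A` and the partial transpose of `B` positive semidefinite. For `i ≠ j` one
of the entries `φ(E i i) j j` and `φ(E j j) i i` vanishes; it dominates the corresponding diagonal
entry of the partial transpose of `B`, whose row or column through that entry therefore vanishes
too, and with it `η(E i j) i j`. So in the sum of all `φ(E i j) i j` the part of `η` is a sum of
diagonal entries, hence nonnegative, and the part of `ψ` is `⟨v, A v⟩ ≥ 0` with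
`v = ∑ i, e i ⊗ e i`. But for the Choi-type map this sum is `3 - 6`.
-/

open scoped ComplexOrder

section PosSemidef

variable {n 𝕜 : Type*} [RCLike 𝕜] {A : Matrix n n 𝕜}

lemma posSemidef_apply_eq_zero_of_diag_right (hA : A.PosSemidef) {j : n} (hj : A j j = 0) (i : n) :
    A i j = 0 := by
  -- `mulVec` needs a finite index type, hence the restriction to the rows and columns `i`, `j`.
  have hcol : A.submatrix ![i, j] ![i, j] *ᵥ Pi.single 1 1 = 0 :=
    ((hA.submatrix ![i, j]).dotProduct_mulVec_zero_iff _).1 <| by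
      simpa [-submatrix_cons_row] using hj
  simpa [-submatrix_cons_row] using congrFun hcol 0

lemma posSemidef_apply_eq_zero_of_diag_left (hA : A.PosSemidef) {i : n} (hi : A i i = 0) (j : n) :
    A i j = 0 := by
  rw [← hA.isHermitian.apply i j, posSemidef_apply_eq_zero_of_diag_right hA hi, star_zero]

end PosSemidef

lemma posSemidef_sum_sum_nonneg {n R : Type*} [Fintype n] [Ring R] [PartialOrder R] [StarRing R]
    {A : Matrix n n R} (hA : A.PosSemidef) : 0 ≤ ∑ i, ∑ j, A i j := by
  simpa [dotProduct, mulVec] using hA.dotProduct_mulVec_nonneg 1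

section BlockMatrix

variable {m n R : Type*}

/-- The partial transpose of a block matrix: each of its `n × n` blocks is transposed. -/
def partialTranspose (A : Matrix (m × n) (m × n) R) : Matrix (m × n) (m × n) R :=
  of fun p q => A (p.1, q.2) (q.1, p.2)

/-- The Choi matrix of a map between matrix algebras: its `(i, j)` block is the image of the matrix
unit `E i j`, so its entry at `(i, k)`, `(j, l)` is the `(k, l)` entry of that image. -/
def choiMatrix [DecidableEq m] [Zero R] [One R] (φ : Matrix m m R → Matrix n n R) :
    Matrix (m × n) (m × n) R :=
  comp m m n n R (of fun i j => φ (single i j 1))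

lemma isPosElem_of_single [Fintype n] [DecidableEq n] [Ring R] [StarRing R] :
    IsPosElem (of fun i j : n => (single i j 1 : Matrix n n R)) := by
  obtain _ | ⟨⟨i₀⟩⟩ := isEmpty_or_nonempty n
  · exact ⟨0, Subsingleton.elim _ _⟩
  · refine ⟨of fun i j => if i = i₀ then single i₀ j 1 else 0, ?_⟩
    ext1 i j
    simp [mul_apply, star_eq_conjTranspose]

lemma IsPosElem.posSemidef_comp [Fintype m] [DecidableEq m] [Fintype n] [DecidableEq n]
    [Ring R] [PartialOrder R] [StarRing R] [StarOrderedRing R] {s : Matrix m m (Matrix n n R)}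
    (hs : IsPosElem s) : (comp m m n n R s).PosSemidef := by
  obtain ⟨b, rfl⟩ := hs
  have hcomp : comp m m n n R (star b * b) = (comp m m n n R b)ᴴ * comp m m n n R b :=
    map_mul (compRingEquiv m n R) (star b) b
  exact hcomp ▸ posSemidef_conjTranspose_mul_self _

end BlockMatrix

theorem sum_sum_add_diag_diag_nonneg {n 𝕜 : Type*} [Fintype n] [RCLike 𝕜]
    {A B : Matrix (n × n) (n × n) 𝕜} (hA : A.PosSemidef) (hB : (partialTranspose B).PosSemidef)
    (hzero : ∀ i j, i ≠ j → (A + B) (i, j) (i, j) = 0 ∨ (A + B) (j, i) (j, i) = 0) :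
    0 ≤ ∑ i, ∑ j, (A + B) (i, i) (j, j) := by
  have hB_diag (p : n × n) (hp : (A + B) p p = 0) : partialTranspose B p p = 0 :=
    ((add_eq_zero_iff_of_nonneg hA.diag_nonneg hB.diag_nonneg).1 hp).2
  have hB_off (i j : n) (hij : i ≠ j) : B (i, i) (j, j) = 0 :=
    (hzero i j hij).elim
      (fun h => posSemidef_apply_eq_zero_of_diag_left hB (hB_diag _ h) (j, i))
      (fun h => posSemidef_apply_eq_zero_of_diag_right hB (hB_diag _ h) (i, j))
  have hB_nonneg (i j : n) : 0 ≤ B (i, i) (j, j) := by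
    obtain rfl | hij := eq_or_ne i j
    · exact hB.diag_nonneg (i := (i, i))
    · exact (hB_off i j hij).ge
  have hA_sum : 0 ≤ ∑ i, ∑ j, A (i, i) (j, j) :=
    posSemidef_sum_sum_nonneg (hA.submatrix fun i => (i, i))
  simp only [Matrix.add_apply, Finset.sum_add_distrib]
  exact add_nonneg hA_sum (Finset.sum_nonneg fun i _ => Finset.sum_nonneg fun j _ => hB_nonneg i j)

lemma IsCPMap3.posSemidef_choiMatrix
    {ψ : Matrix (Fin 3) (Fin 3) ℂ →ₗ[ℂ] Matrix (Fin 3) (Fin 3) ℂ} (hψ : IsCPMap3 ψ) :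
    (choiMatrix ψ).PosSemidef :=
  (hψ 3 _ isPosElem_of_single).posSemidef_comp

lemma IsCoCPMap3.posSemidef_partialTranspose_choiMatrix
    {η : Matrix (Fin 3) (Fin 3) ℂ →ₗ[ℂ] Matrix (Fin 3) (Fin 3) ℂ} (hη : IsCoCPMap3 η) :
    (partialTranspose (choiMatrix η)).PosSemidef :=
  (hη 3 _ isPosElem_of_single).posSemidef_comp

lemma choiMatrix_choiFun_eq_zero_or_eq_zero (μ : ℝ) {i j : Fin 3} (hij : i ≠ j) :
    choiMatrix (choiFun μ) (i, j) (i, j) = 0 ∨ choiMatrix (choiFun μ) (j, i) (j, i) = 0 := by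
  fin_cases i <;> fin_cases j <;> simp [choiMatrix, choiFun, single] at hij ⊢

lemma choiMatrix_choiFun_diag_diag (μ : ℝ) (i j : Fin 3) :
    choiMatrix (choiFun μ) (i, i) (j, j) = if i = j then 1 else -1 := by
  fin_cases i <;> fin_cases j <;> simp [choiMatrix, choiFun, single]

lemma sum_sum_choiMatrix_choiFun_diag_diag (μ : ℝ) :
    ∑ i, ∑ j, choiMatrix (choiFun μ) (i, i) (j, j) = -3 := by
  simp +decide only [choiMatrix_choiFun_diag_diag, Fin.sum_univ_three, if_true, if_false]
  norm_num

theorem choiFun_not_decomposable_general (μ : ℝ) :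
    ¬ ∃ ψ η : Matrix (Fin 3) (Fin 3) ℂ →ₗ[ℂ] Matrix (Fin 3) (Fin 3) ℂ,
        IsCPMap3 ψ ∧ IsCoCPMap3 η ∧ ∀ x, choiFun μ x = ψ x + η x := by
  rintro ⟨ψ, η, hψ, hη, hφ⟩
  have hsplit : choiMatrix (choiFun μ) = choiMatrix ψ + choiMatrix η := by
    ext p q
    simp [choiMatrix, hφ]
  have hnonneg : 0 ≤ ∑ i, ∑ j, choiMatrix (choiFun μ) (i, i) (j, j) := by
    rw [hsplit]
    refine sum_sum_add_diag_diag_nonneg hψ.posSemidef_choiMatrix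
      hη.posSemidef_partialTranspose_choiMatrix fun i j hij => ?_
    rw [← hsplit]
    exact choiMatrix_choiFun_eq_zero_or_eq_zero μ hij
  rw [sum_sum_choiMatrix_choiFun_diag_diag] at hnonneg
  norm_num at hnonneg

/-- for `μ ≥ 1` the Choi-type map is not decomposable. -/
theorem choiFun_not_decomposable (μ : ℝ) (hμ : 1 ≤ μ) :
    ¬ ∃ ψ η : Matrix (Fin 3) (Fin 3) ℂ →ₗ[ℂ] Matrix (Fin 3) (Fin 3) ℂ,
        IsCPMap3 ψ ∧ IsCoCPMap3 η ∧ ∀ x, choiFun μ x = ψ x + η x :=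
  choiFun_not_decomposable_general μ
end
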